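/- arXiv:0811.0359 — 2 statements merged into one kernel-verified Lean document; each statement's English description precedes it below -/
import Mathlib

section
/- Let Φ be a theory in an FO-AEL language in which the modal operator 𝖫 occurs only applied to objective atomic formulas, let Γ be a set of objective formulas, and let X ∈ {E,A}. Then Γ = {φ objective | Φ ⊨ˣ_{Γ_oga} φ} if and only if Γ = T_o for some stableˣ expansion T of Φ. -/
set_option autoImplicit false

/-! # First-order autoepistemic logic (FO-AEL): syntax -/

structure Sig : Type 1 where
  Func : Type
  Pred : Type
  arF : Func → ℕ
  arP : Pred → ℕ

inductive Term (S : Sig) : Type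
  | var : ℕ → Term S
  | func : (f : S.Func) → (Fin (S.arF f) → Term S) → Term S

inductive Formula (S : Sig) : Type
  | atom : (p : S.Pred) → (Fin (S.arP p) → Term S) → Formula S
  | eq : Term S → Term S → Formula S
  | not : Formula S → Formula S
  | and : Formula S → Formula S → Formula S
  | ex : ℕ → Formula S → Formula S
  | box : Formula S → Formula S

namespace Term

variable {S : Sig}

/-- A term is ground if it contains no variables; ground terms are the *names*. -/
def isGround : Term S → Prop
  | var _ => False
  | func _ ts => ∀ i, (ts i).isGround

def hasVar (x : ℕ) : Term S → Prop
  | var y => y = x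
  | func _ ts => ∃ i, (ts i).hasVar x

/-- Application of a partial (name) substitution to a term. -/
def subst (β : ℕ → Option (Term S)) : Term S → Term S
  | var x => (β x).getD (var x)
  | func f ts => func f (fun i => (ts i).subst β)

/-- The function symbols occurring in a term. -/
def funcs : Term S → Set S.Func
  | var _ => ∅
  | func f ts => insert f (⋃ i, (ts i).funcs)

/-- `t` is a name (ground term) over the set `F` of function symbols. -/
def isNameOf (F : Set S.Func) : Term S → Prop
  | var _ => False
  | func f ts => f ∈ F ∧ ∀ i, (ts i).isNameOf F

end Term

namespace Formula

variable {S : Sig}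

/-- A formula is objective if it is 𝖫-free. -/
def isObjective : Formula S → Prop
  | atom _ _ => True
  | eq _ _ => True
  | not φ => φ.isObjective
  | and φ ψ => φ.isObjective ∧ ψ.isObjective
  | ex _ φ => φ.isObjective
  | box _ => False

def isGround : Formula S → Prop
  | atom _ ts => ∀ i, (ts i).isGround
  | eq t₁ t₂ => t₁.isGround ∧ t₂.isGround
  | not φ => φ.isGround
  | and φ ψ => φ.isGround ∧ ψ.isGround
  | ex _ _ => False
  | box φ => φ.isGround

def isAtomic : Formula S → Prop
  | atom _ _ => True
  | eq _ _ => True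
  | not _ => False
  | and _ _ => False
  | ex _ _ => False
  | box _ => False

/-- The modal operator 𝖫 occurs only applied to (objective) atomic formulas. -/
def boxAtomic : Formula S → Prop
  | atom _ _ => True
  | eq _ _ => True
  | not φ => φ.boxAtomic
  | and φ ψ => φ.boxAtomic ∧ ψ.boxAtomic
  | ex _ φ => φ.boxAtomic
  | box φ => φ.isAtomic

/-- Propositional formulas: built from 0-ary predicates only. -/
def isPropositional : Formula S → Prop
  | atom p _ => S.arP p = 0
  | eq _ _ => False
  | not φ => φ.isPropositional
  | and φ ψ => φ.isPropositional ∧ ψ.isPropositional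
  | ex _ _ => False
  | box _ => False

def freeIn (x : ℕ) : Formula S → Prop
  | atom _ ts => ∃ i, (ts i).hasVar x
  | eq t₁ t₂ => t₁.hasVar x ∨ t₂.hasVar x
  | not φ => φ.freeIn x
  | and φ ψ => φ.freeIn x ∨ ψ.freeIn x
  | ex y φ => x ≠ y ∧ φ.freeIn x
  | box φ => φ.freeIn x

/-- A formula is closed (a sentence) if it has no free variables. -/
def closed (φ : Formula S) : Prop := ∀ x, ¬ φ.freeIn x

/-- Capture-avoiding application of a partial name substitution (values are ground). -/
def subst (β : ℕ → Option (Term S)) : Formula S → Formula S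
  | atom p ts => atom p (fun i => (ts i).subst β)
  | eq t₁ t₂ => eq (t₁.subst β) (t₂.subst β)
  | not φ => not (φ.subst β)
  | and φ ψ => and (φ.subst β) (ψ.subst β)
  | ex y φ => ex y (φ.subst (fun z => if z = y then none else β z))
  | box φ => box (φ.subst β)

def funcs : Formula S → Set S.Func
  | atom _ ts => ⋃ i, (ts i).funcs
  | eq t₁ t₂ => t₁.funcs ∪ t₂.funcs
  | not φ => φ.funcs
  | and φ ψ => φ.funcs ∪ ψ.funcs
  | ex _ φ => φ.funcs
  | box φ => φ.funcs

def preds : Formula S → Set S.Pred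
  | atom p _ => {p}
  | eq _ _ => ∅
  | not φ => φ.preds
  | and φ ψ => φ.preds ∪ ψ.preds
  | ex _ φ => φ.preds
  | box φ => φ.preds

/-- `φ ∨ ψ` as an abbreviation: `¬(¬φ ∧ ¬ψ)`. -/
def or (φ ψ : Formula S) : Formula S := not (and (not φ) (not ψ))

/-- `φ ⊃ ψ` as an abbreviation: `¬(φ ∧ ¬ψ)`. -/
def imp (φ ψ : Formula S) : Formula S := not (and φ (not ψ))

/-- `∀x.φ` as an abbreviation: `¬∃x.¬φ`. -/
def all (x : ℕ) (φ : Formula S) : Formula S := not (ex x (not φ))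

end Formula

/-! ## Semantics -/

structure Interp (S : Sig) where
  U : Type
  nonempty : Nonempty U
  interpF : (f : S.Func) → (Fin (S.arF f) → U) → U
  interpP : (p : S.Pred) → (Fin (S.arP p) → U) → Prop

noncomputable def Interp.dflt {S : Sig} (w : Interp S) : w.U := Classical.choice w.nonempty

def Term.eval {S : Sig} (w : Interp S) (B : ℕ → w.U) : Term S → w.U
  | Term.var x => B x
  | Term.func f ts => w.interpF f (fun i => (ts i).eval w B)

/-- Evaluation of a ground term (the assignment is irrelevant). -/
noncomputable def Term.evalG {S : Sig} (w : Interp S) (t : Term S) : w.U :=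
  t.eval w (fun _ => w.dflt)

/-- An individual is named if some name (ground term) denotes it. -/
def IsNamed {S : Sig} (w : Interp S) (k : w.U) : Prop :=
  ∃ t : Term S, t.isGround ∧ Term.evalG w t = k

/-- A name substitution `β` is associated with the variable assignment `B`:
its domain is exactly the set of variables whose `B`-value is named, and
it assigns to each such variable a name denoting its `B`-value. -/
def Assoc {S : Sig} (w : Interp S) (B : ℕ → w.U) (β : ℕ → Option (Term S)) : Prop :=
  ∀ x : ℕ,
    (IsNamed w (B x) → (β x).isSome) ∧
    (∀ t : Term S, β x = some t → t.isGround ∧ Term.evalG w t = B x)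

/-- The two semantics: any-name (E) and all-name (A). -/
inductive Sem : Type
  | any
  | all

/-- Satisfaction of a formula in an autoepistemic interpretation `⟨w,Γ⟩`
under a variable assignment, for the any-name (E) resp. all-name (A) semantics. -/
def Sat {S : Sig} (X : Sem) (w : Interp S) (Γ : Set (Formula S)) :
    Formula S → (ℕ → w.U) → Prop
  | Formula.atom p ts, B => w.interpP p (fun i => (ts i).eval w B)
  | Formula.eq t₁ t₂, B => t₁.eval w B = t₂.eval w B
  | Formula.not φ, B => ¬ Sat X w Γ φ B
  | Formula.and φ ψ, B => Sat X w Γ φ B ∧ Sat X w Γ ψ B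
  | Formula.ex x φ, B => ∃ u : w.U, Sat X w Γ φ (Function.update B x u)
  | Formula.box φ, B =>
      match X with
      | Sem.any => ∃ β, Assoc w B β ∧ (φ.subst β).closed ∧ φ.subst β ∈ Γ
      | Sem.all => ∀ β, Assoc w B β → (φ.subst β).closed ∧ φ.subst β ∈ Γ

def ModelsF {S : Sig} (X : Sem) (w : Interp S) (Γ : Set (Formula S)) (φ : Formula S) : Prop :=
  ∀ B : ℕ → w.U, Sat X w Γ φ B

def ModelsT {S : Sig} (X : Sem) (w : Interp S) (Γ Φ : Set (Formula S)) : Prop :=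
  ∀ φ ∈ Φ, ModelsF X w Γ φ

/-- `Φ ⊨ˣ_Γ φ`. -/
def Entails {S : Sig} (X : Sem) (Φ Γ : Set (Formula S)) (φ : Formula S) : Prop :=
  ∀ w : Interp S, ModelsT X w Γ Φ → ModelsF X w Γ φ

/-- The standard names assumption: all names are interpreted distinctly
and every individual is named. -/
def SNA {S : Sig} (w : Interp S) : Prop :=
  (∀ t₁ t₂ : Term S, t₁.isGround → t₂.isGround → Term.evalG w t₁ = Term.evalG w t₂ → t₁ = t₂) ∧
  (∀ k : w.U, IsNamed w k)

/-- Entailment restricted to interpretations satisfying the standard names assumption. -/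
def EntailsSN {S : Sig} (X : Sem) (Φ Γ : Set (Formula S)) (φ : Formula S) : Prop :=
  ∀ w : Interp S, SNA w → ModelsT X w Γ Φ → ModelsF X w Γ φ

/-- `T` is a stableˣ expansion of `Φ`. -/
def StableExp {S : Sig} (X : Sem) (Φ T : Set (Formula S)) : Prop :=
  T = {φ | Entails X Φ T φ}

def objOf {S : Sig} (T : Set (Formula S)) : Set (Formula S) :=
  {φ ∈ T | φ.isObjective}

def ogOf {S : Sig} (T : Set (Formula S)) : Set (Formula S) :=
  {φ ∈ T | φ.isObjective ∧ φ.isGround}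

def ogaOf {S : Sig} (T : Set (Formula S)) : Set (Formula S) :=
  {φ ∈ T | φ.isObjective ∧ φ.isGround ∧ φ.isAtomic}

def Consistent {S : Sig} (T : Set (Formula S)) : Prop := T ≠ Set.univ

/-- `Φ₁ ≡ˣ Φ₂`: same stableˣ expansions. -/
def ExpEquiv {S : Sig} (X : Sem) (Φ₁ Φ₂ : Set (Formula S)) : Prop :=
  ∀ T, StableExp X Φ₁ T ↔ StableExp X Φ₂ T

/-- `Φ₁ ≡ˣ_γ Φ₂` for a selector `sel` (e.g. `ogaOf`): the stableˣ expansions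
correspond with respect to `sel`. -/
def ExpEquivSel {S : Sig} (X : Sem) (sel : Set (Formula S) → Set (Formula S))
    (Φ₁ Φ₂ : Set (Formula S)) : Prop :=
  (∀ T, StableExp X Φ₁ T → ∃ T', StableExp X Φ₂ T' ∧ sel T = sel T') ∧
  (∀ T', StableExp X Φ₂ T' → ∃ T, StableExp X Φ₁ T ∧ sel T = sel T')

/-- Autoepistemicˣ consequences of `Φ`. -/
def Cn {S : Sig} (X : Sem) (Φ : Set (Formula S)) : Set (Formula S) :=
  {φ | ∀ T, StableExp X Φ T → φ ∈ T}

def CnO {S : Sig} (X : Sem) (Φ : Set (Formula S)) : Set (Formula S) :=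
  {φ ∈ Cn X Φ | φ.isObjective}

def CnOg {S : Sig} (X : Sem) (Φ : Set (Formula S)) : Set (Formula S) :=
  {φ ∈ Cn X Φ | φ.isObjective ∧ φ.isGround}

/-! ## Logic programs -/

structure PAtom (S : Sig) where
  p : S.Pred
  args : Fin (S.arP p) → Term S

namespace PAtom

variable {S : Sig}

def toFormula (a : PAtom S) : Formula S := Formula.atom a.p a.args

def isGround (a : PAtom S) : Prop := ∀ i, (a.args i).isGround

def hasVar (x : ℕ) (a : PAtom S) : Prop := ∃ i, (a.args i).hasVar x

def substA (σ : ℕ → Term S) (a : PAtom S) : PAtom S :=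
  ⟨a.p, fun i => (a.args i).subst (fun x => some (σ x))⟩

def funcs (a : PAtom S) : Set S.Func := ⋃ i, (a.args i).funcs

end PAtom

/-- A (disjunctive) rule `h₁ | … | h_l ← b₁,…,b_m, not c₁,…,not c_n`,
together with a list of the variables occurring in it. -/
structure Rule (S : Sig) where
  head : List (PAtom S)
  pos : List (PAtom S)
  neg : List (PAtom S)
  vars : List ℕ

namespace Rule

variable {S : Sig}

def atoms (r : Rule S) : List (PAtom S) := r.head ++ r.pos ++ r.neg

def hasVar (x : ℕ) (r : Rule S) : Prop := ∃ a ∈ r.atoms, PAtom.hasVar x a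

/-- Well-formedness: at least one head atom, and `vars` lists all variables of the rule. -/
def wf (r : Rule S) : Prop := r.head ≠ [] ∧ ∀ x, r.hasVar x → x ∈ r.vars

def isNormal (r : Rule S) : Prop := r.head.length = 1

def isGround (r : Rule S) : Prop := (∀ a ∈ r.atoms, a.isGround) ∧ r.vars = []

def isSafe (r : Rule S) : Prop := ∀ x, r.hasVar x → ∃ a ∈ r.pos, PAtom.hasVar x a

def isPositive (r : Rule S) : Prop := r.neg = []

def applySubst (σ : ℕ → Term S) (r : Rule S) : Rule S :=
  ⟨r.head.map (PAtom.substA σ), r.pos.map (PAtom.substA σ), r.neg.map (PAtom.substA σ), []⟩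

end Rule

abbrev Program (S : Sig) := Set (Rule S)

def progWf {S : Sig} (P : Program S) : Prop := ∀ r ∈ P, r.wf
def progNormal {S : Sig} (P : Program S) : Prop := ∀ r ∈ P, r.isNormal
def progGround {S : Sig} (P : Program S) : Prop := ∀ r ∈ P, r.isGround
def progSafe {S : Sig} (P : Program S) : Prop := ∀ r ∈ P, r.isSafe
def progPositive {S : Sig} (P : Program S) : Prop := ∀ r ∈ P, r.isPositive

/-- The function symbols occurring in `P` (part of the signature `Σ_P`). -/
def progFuncs {S : Sig} (P : Program S) : Set S.Func :=
  {f | ∃ r ∈ P, ∃ a ∈ r.atoms, f ∈ a.funcs}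

/-- The predicate symbols occurring in `P` (part of the signature `Σ_P`). -/
def progPreds {S : Sig} (P : Program S) : Set S.Pred :=
  {q | ∃ r ∈ P, ∃ a ∈ r.atoms, a.p = q}

/-- The ambient signature is exactly the signature `Σ_P` of `P`. -/
def fullSig {S : Sig} (P : Program S) : Prop :=
  (∀ f : S.Func, f ∈ progFuncs P) ∧ (∀ q : S.Pred, q ∈ progPreds P)

/-- Standing assumption: `Σ_P` contains a 0-ary function symbol whenever it
has a predicate symbol of arity greater than 0. -/
def goodSig {S : Sig} (P : Program S) : Prop :=
  (∃ q ∈ progPreds P, 0 < S.arP q) → ∃ f ∈ progFuncs P, S.arF f = 0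

/-! ## Embeddings of logic programs into FO-AEL -/

def andAll {S : Sig} : Formula S → List (Formula S) → Formula S
  | φ, [] => φ
  | φ, ψ :: rest => andAll (Formula.and φ ψ) rest

def orAll {S : Sig} : Formula S → List (Formula S) → Formula S
  | φ, [] => φ
  | φ, ψ :: rest => orAll (Formula.or φ ψ) rest

/-- `impOf ants c` is `⋀ ants ⊃ c` (just `c` if there are no antecedents). -/
def impOf {S : Sig} : List (Formula S) → Formula S → Formula S
  | [], c => c
  | a :: rest, c => Formula.imp (andAll a rest) c

/-- Disjunction of a nonempty list (junk value on the empty list,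
which is excluded by rule well-formedness). -/
def disjOf {S : Sig} : List (Formula S) → Formula S
  | [] => Formula.eq (Term.var 0) (Term.var 0)
  | h :: rest => orAll h rest

/-- Universal uclosure over the listed variables. -/
def uclosure {S : Sig} (vs : List ℕ) (φ : Formula S) : Formula S :=
  vs.foldr Formula.all φ

def bodyHP {S : Sig} (r : Rule S) : List (Formula S) :=
  r.pos.map PAtom.toFormula ++ r.neg.map (fun c => Formula.not (Formula.box c.toFormula))

def bodyE {S : Sig} (r : Rule S) : List (Formula S) :=
  r.pos.map (fun b => Formula.and b.toFormula (Formula.box b.toFormula)) ++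
    r.neg.map (fun c => Formula.not (Formula.box c.toFormula))

/-- `τ_HP(r)` resp. `τ^∨_HP(r)`. -/
def embHP {S : Sig} (r : Rule S) : Formula S :=
  uclosure r.vars (impOf (bodyHP r) (disjOf (r.head.map PAtom.toFormula)))

/-- `τ_EB(r)` resp. `τ^∨_EB(r)`. -/
def embEB {S : Sig} (r : Rule S) : Formula S :=
  uclosure r.vars (impOf (bodyE r) (disjOf (r.head.map PAtom.toFormula)))

/-- `τ_EH(r)` resp. `τ^∨_EH(r)`. -/
def embEH {S : Sig} (r : Rule S) : Formula S :=
  uclosure r.vars (impOf (bodyE r)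
    (disjOf (r.head.map (fun h => Formula.and h.toFormula (Formula.box h.toFormula)))))

/-- The unique-names axioms `¬𝖫(t₁=t₂) ⊃ t₁≠t₂` for distinct names of `Σ_P`. -/
def UNAax {S : Sig} (P : Program S) : Set (Formula S) :=
  {φ | ∃ t₁ t₂ : Term S, t₁.isNameOf (progFuncs P) ∧ t₂.isNameOf (progFuncs P) ∧ t₁ ≠ t₂ ∧
        φ = Formula.imp (Formula.not (Formula.box (Formula.eq t₁ t₂)))
              (Formula.not (Formula.eq t₁ t₂))}

/-- The positive introspection axioms `α ⊃ 𝖫α` for objective ground atoms of `Σ_P`. -/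
def PIAax {S : Sig} (P : Program S) : Set (Formula S) :=
  {φ | ∃ a : PAtom S, a.p ∈ progPreds P ∧ (∀ i, (a.args i).isNameOf (progFuncs P)) ∧
        φ = Formula.imp a.toFormula (Formula.box a.toFormula)}

def ruleEmb {S : Sig} (emb : Rule S → Formula S) (P : Program S) : Set (Formula S) :=
  {φ | ∃ r ∈ P, φ = emb r}

def tauHP {S : Sig} (P : Program S) : Set (Formula S) := ruleEmb embHP P ∪ UNAax P
def tauEB {S : Sig} (P : Program S) : Set (Formula S) := ruleEmb embEB P ∪ UNAax P
def tauEH {S : Sig} (P : Program S) : Set (Formula S) := ruleEmb embEH P ∪ UNAax P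
def tauHPv {S : Sig} (P : Program S) : Set (Formula S) := ruleEmb embHP P ∪ PIAax P ∪ UNAax P
def tauEBv {S : Sig} (P : Program S) : Set (Formula S) := ruleEmb embEB P ∪ PIAax P ∪ UNAax P
def tauEHv {S : Sig} (P : Program S) : Set (Formula S) := ruleEmb embEH P ∪ UNAax P
def tauHPminus {S : Sig} (P : Program S) : Set (Formula S) := ruleEmb embHP P
def tauEHvminus {S : Sig} (P : Program S) : Set (Formula S) := ruleEmb embEH P

/-! ## Grounding and stable models -/

/-- The grounding of `P`: all ground instantiations of rules of `P`
obtained by replacing variables with names of `Σ_P`. -/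
def grP {S : Sig} (P : Program S) : Program S :=
  {r' | ∃ r ∈ P, ∃ σ : ℕ → Term S,
        (∀ x, r.hasVar x → (σ x).isNameOf (progFuncs P)) ∧ r' = Rule.applySubst σ r}

/-- A Herbrand interpretation: a set of ground atomic formulas. -/
def HerbrandI {S : Sig} (M : Set (Formula S)) : Prop :=
  ∀ φ ∈ M, φ.isAtomic ∧ φ.isGround

/-- `M` is a Herbrand model of the positive ground program `Q` (relative to the
names of `Σ_P`): rules are satisfied and `t = t ∈ M` for every name `t`. -/
def HerbrandModelOf {S : Sig} (P Q : Program S) (M : Set (Formula S)) : Prop :=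
  HerbrandI M ∧
  (∀ r ∈ Q, (∀ b ∈ r.pos, PAtom.toFormula b ∈ M) → ∃ h ∈ r.head, PAtom.toFormula h ∈ M) ∧
  (∀ t : Term S, t.isNameOf (progFuncs P) → Formula.eq t t ∈ M)

/-- The Gelfond–Lifschitz reduct of `gr(P)` with respect to `M`. -/
def reduct {S : Sig} (P : Program S) (M : Set (Formula S)) : Program S :=
  {r' | ∃ r ∈ grP P, (∀ c ∈ r.neg, PAtom.toFormula c ∉ M) ∧
        r' = ⟨r.head, r.pos, [], r.vars⟩}

/-- `M` is a stable model of `P`: a minimal Herbrand model of the reduct of `gr(P)` w.r.t. `M`. -/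
def isStableModel {S : Sig} (P : Program S) (M : Set (Formula S)) : Prop :=
  HerbrandModelOf P (reduct P M) M ∧
  ∀ M', M' ⊆ M → HerbrandModelOf P (reduct P M) M' → M' = M

/-! ## First-order theories and classes thereof -/

/-- An FO theory: a set of objective sentences. -/
def FOTheory {S : Sig} (Φ : Set (Formula S)) : Prop :=
  ∀ φ ∈ Φ, φ.isObjective ∧ φ.closed

def theoryFuncs {S : Sig} (Φ : Set (Formula S)) : Set S.Func := {f | ∃ φ ∈ Φ, f ∈ φ.funcs}
def theoryPreds {S : Sig} (Φ : Set (Formula S)) : Set S.Pred := {q | ∃ φ ∈ Φ, q ∈ φ.preds}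

/-- The ambient signature is exactly the union of the signatures of `Φ` and `P`. -/
def CoverSig {S : Sig} (Φ : Set (Formula S)) (P : Program S) : Prop :=
  (∀ f : S.Func, f ∈ theoryFuncs Φ ∪ progFuncs P) ∧
  (∀ q : S.Pred, q ∈ theoryPreds Φ ∪ progPreds P)

def exClosure {S : Sig} (ys : List ℕ) (φ : Formula S) : Formula S := ys.foldr Formula.ex φ

/-- A Horn sentence `(∀)(b₁ ∧ … ∧ b_n ⊃ h)` with atomic `b_i`, `h`
(the consequent `h` may be absent). -/
def isHornSentence {S : Sig} (φ : Formula S) : Prop :=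
  ∃ (vs : List ℕ) (bs : List (Formula S)),
    (∀ b ∈ bs, b.isAtomic) ∧
    ((∃ h : Formula S, h.isAtomic ∧ φ = uclosure vs (impOf bs h)) ∨
     (∃ b rest, bs = b :: rest ∧ φ = uclosure vs (Formula.not (andAll b rest))))

def HornTheory {S : Sig} (Φ : Set (Formula S)) : Prop :=
  FOTheory Φ ∧ ∀ φ ∈ Φ, isHornSentence φ

/-- A generalized Horn sentence `(∀)(b₁ ∧ … ∧ b_n ⊃ ∃ȳ.h)` with atomic `b_i`, `h`,
the variables `ȳ` occurring only in `h` (the consequent may be absent). -/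
def isGHornSentence {S : Sig} (φ : Formula S) : Prop :=
  ∃ (vs : List ℕ) (bs : List (Formula S)),
    (∀ b ∈ bs, b.isAtomic) ∧
    ((∃ (ys : List ℕ) (h : Formula S), h.isAtomic ∧
        (∀ y ∈ ys, ∀ b ∈ bs, ¬ b.freeIn y) ∧
        φ = uclosure vs (impOf bs (exClosure ys h))) ∨
     (∃ b rest, bs = b :: rest ∧ φ = uclosure vs (Formula.not (andAll b rest))))

def GHornTheory {S : Sig} (Φ : Set (Formula S)) : Prop :=
  FOTheory Φ ∧ ∀ φ ∈ Φ, isGHornSentence φ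

def PropTheory {S : Sig} (Φ : Set (Formula S)) : Prop :=
  FOTheory Φ ∧ ∀ φ ∈ Φ, φ.isPropositional


namespace Aux

variable {S : Sig}

def Good (Γ Γ' : Set (Formula S)) : Formula S → Prop
  | Formula.atom _ _ => True
  | Formula.eq _ _ => True
  | Formula.not φ => Good Γ Γ' φ
  | Formula.and φ ψ => Good Γ Γ' φ ∧ Good Γ Γ' ψ
  | Formula.ex _ φ => Good Γ Γ' φ
  | Formula.box φ => ∀ β, (φ.subst β).closed → (φ.subst β ∈ Γ ↔ φ.subst β ∈ Γ')

theorem sat_congr (X : Sem) (w : Interp S) (Γ Γ' : Set (Formula S)) (φ : Formula S)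
    (h : Good Γ Γ' φ) : ∀ B, Sat X w Γ φ B ↔ Sat X w Γ' φ B := by
  induction φ with
  | atom p ts => intro B; exact Iff.rfl
  | eq t u => intro B; exact Iff.rfl
  | not φ ih => intro B; exact not_congr (ih h B)
  | and φ ψ ih1 ih2 => intro B; exact and_congr (ih1 h.1 B) (ih2 h.2 B)
  | ex x φ ih => intro B; exact exists_congr fun u => ih h _
  | box φ ih =>
    intro B
    cases X with
    | any => exact exists_congr fun β => and_congr_right fun _ => and_congr_right fun hc => h β hc
    | all => exact forall_congr' fun β => imp_congr_right fun _ => and_congr_right fun hc => h β hc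

theorem good_obj (Γ Γ' : Set (Formula S)) (φ : Formula S) (h : φ.isObjective) : Good Γ Γ' φ := by
  induction φ with
  | atom p ts => trivial
  | eq t u => trivial
  | not φ ih => exact ih h
  | and φ ψ ih1 ih2 => exact ⟨ih1 h.1, ih2 h.2⟩
  | ex x φ ih => exact ih h
  | box φ ih => exact h.elim

theorem ground_of (t : Term S) (h : ∀ x, ¬ t.hasVar x) : t.isGround := by
  induction t with
  | var y => exact h y rfl
  | func f ts ih => exact fun i => ih i fun x hx => h x ⟨i, hx⟩

theorem atomic_subst (φ : Formula S) (β) (h : φ.isAtomic) : (φ.subst β).isAtomic := by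
  cases φ <;> first | exact h.elim | trivial

theorem atomic_ground (φ : Formula S) (h : φ.isAtomic) (hc : φ.closed) :
    φ.isObjective ∧ φ.isGround ∧ φ.isAtomic := by
  cases φ with
  | atom p ts => exact ⟨trivial, fun i => ground_of _ fun x hx => hc x ⟨i, hx⟩, trivial⟩
  | eq t u => exact ⟨trivial, ⟨ground_of _ fun x hx => hc x (Or.inl hx),
      ground_of _ fun x hx => hc x (Or.inr hx)⟩, trivial⟩
  | not φ => exact h.elim
  | and φ ψ => exact h.elim
  | ex x φ => exact h.elim
  | box φ => exact h.elim

theorem good_box (T : Set (Formula S)) (φ : Formula S) (h : φ.boxAtomic) :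
    Good T (ogaOf T) φ := by
  induction φ with
  | atom p ts => trivial
  | eq t u => trivial
  | not φ ih => exact ih h
  | and φ ψ ih1 ih2 => exact ⟨ih1 h.1, ih2 h.2⟩
  | ex x φ ih => exact ih h
  | box φ ih =>
    exact fun β hc => ⟨fun hm => ⟨hm, atomic_ground _ (atomic_subst φ β h) hc⟩, fun hm => hm.1⟩

def depth : Formula S → ℕ
  | Formula.atom _ _ => 0
  | Formula.eq _ _ => 0
  | Formula.not φ => depth φ
  | Formula.and φ ψ => max (depth φ) (depth ψ)
  | Formula.ex _ φ => depth φ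
  | Formula.box φ => depth φ + 1

theorem depth_subst (φ : Formula S) : ∀ β, depth (φ.subst β) = depth φ := by
  induction φ <;> intro β <;> simp_all [depth, Formula.subst]

theorem good_depth (Γ Γ' : Set (Formula S)) (n : ℕ)
    (H : ∀ ψ, depth ψ < n → (ψ ∈ Γ ↔ ψ ∈ Γ')) (φ : Formula S) (h : depth φ ≤ n) :
    Good Γ Γ' φ := by
  induction φ with
  | atom p ts => trivial
  | eq t u => trivial
  | not φ ih => exact ih h
  | and φ ψ ih1 ih2 => exact ⟨ih1 (le_trans (le_max_left _ _) h), ih2 (le_trans (le_max_right _ _) h)⟩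
  | ex x φ ih => exact ih h
  | box φ ih =>
    exact fun β _ => H _ (by rw [depth_subst]; exact h)

def step (X : Sem) (W : Set (Interp S)) (Γ : Set (Formula S)) : Set (Formula S) :=
  {φ | ∀ w ∈ W, ModelsF X w Γ φ}

theorem step_congr (X : Sem) (W : Set (Interp S)) (Γ Γ' : Set (Formula S)) (φ : Formula S)
    (h : Good Γ Γ' φ) : φ ∈ step X W Γ ↔ φ ∈ step X W Γ' :=
  forall_congr' fun w => imp_congr_right fun _ => forall_congr' fun B => sat_congr X w _ _ φ h B

def it (X : Sem) (W : Set (Interp S)) : ℕ → Set (Formula S)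
  | 0 => ∅
  | n + 1 => step X W (it X W n)

theorem it_agree (X : Sem) (W : Set (Interp S)) (n : ℕ) :
    ∀ m, n ≤ m → ∀ ψ, depth ψ < n → (ψ ∈ it X W n ↔ ψ ∈ it X W m) := by
  induction n with
  | zero => intro m _ ψ h; omega
  | succ n ih =>
    intro m hm ψ h
    obtain ⟨k, rfl⟩ : ∃ k, m = k + 1 := ⟨m - 1, by omega⟩
    exact step_congr X W _ _ ψ (good_depth _ _ n (ih k (by omega)) ψ (by omega))

theorem exists_fix (X : Sem) (W : Set (Interp S)) : ∃ T, T = step X W T := by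
  refine ⟨{φ | φ ∈ it X W (depth φ + 1)}, ?_⟩
  ext φ
  refine step_congr X W _ _ φ (good_depth _ _ (depth φ) ?_ φ le_rfl)
  intro ψ h
  exact (it_agree X W (depth ψ + 1) _ h ψ (Nat.lt_succ_self _)).symm

theorem models_oga (X : Sem) (Φ T : Set (Formula S)) (h : ∀ φ ∈ Φ, Formula.boxAtomic φ)
    (w : Interp S) : ModelsT X w T Φ ↔ ModelsT X w (ogaOf T) Φ :=
  forall_congr' fun φ => forall_congr' fun hφ => forall_congr' fun B =>
    sat_congr X w _ _ φ (good_box T φ (h φ hφ)) B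

theorem oga_obj (T : Set (Formula S)) : ogaOf (objOf T) = ogaOf T := by
  ext φ
  exact ⟨fun h => ⟨h.1.1, h.2⟩, fun h => ⟨⟨h.1, h.2.1⟩, h.2⟩⟩

end Aux

theorem stmt0 {S : Sig} (X : Sem) (Φ Γ : Set (Formula S))
    (hΦclosed : ∀ φ ∈ Φ, Formula.closed φ)
    (hΦbox : ∀ φ ∈ Φ, Formula.boxAtomic φ)
    (hΓobj : ∀ φ ∈ Γ, Formula.isObjective φ) :
    Γ = {φ : Formula S | φ.isObjective ∧ Entails X Φ (ogaOf Γ) φ} ↔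
      ∃ T : Set (Formula S), StableExp X Φ T ∧ Γ = objOf T := by
  constructor
  · intro hΓ
    obtain ⟨T, hT⟩ := Aux.exists_fix X {w | ModelsT X w (ogaOf Γ) Φ}
    have hobj : Γ = objOf T := by
      ext φ
      constructor
      · intro h
        have ho := hΓobj φ h
        rw [hΓ] at h
        refine ⟨?_, ho⟩
        rw [hT]
        exact (Aux.step_congr X _ (ogaOf Γ) T φ (Aux.good_obj _ _ φ ho)).1 h.2
      · rintro ⟨h, ho⟩
        rw [hT] at h
        rw [hΓ]
        exact ⟨ho, (Aux.step_congr X _ (ogaOf Γ) T φ (Aux.good_obj _ _ φ ho)).2 h⟩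
    refine ⟨T, ?_, hobj⟩
    have hoga : ogaOf Γ = ogaOf T := by rw [hobj, Aux.oga_obj]
    rw [hoga] at hT
    show T = _
    ext φ
    rw [Set.ext_iff] at hT
    rw [hT φ]
    exact forall_congr' fun w => imp_congr_left (Aux.models_oga X Φ T hΦbox w).symm
  · rintro ⟨T, hT, hobj⟩
    have hoga : ogaOf Γ = ogaOf T := by rw [hobj, Aux.oga_obj]
    rw [hoga]
    have key : ∀ φ : Formula S, φ.isObjective → (φ ∈ T ↔ Entails X Φ (ogaOf T) φ) := by
      intro φ ho
      have h1 : φ ∈ T ↔ Entails X Φ T φ := Set.ext_iff.1 hT φ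
      rw [h1]
      exact forall_congr' fun w => imp_congr (Aux.models_oga X Φ T hΦbox w)
        (forall_congr' fun B => Aux.sat_congr X w _ _ φ (Aux.good_obj _ _ φ ho) B)
    rw [hobj]
    ext φ
    exact ⟨fun h => ⟨h.2, (key φ h.2).1 h.1⟩, fun h => ⟨(key φ h.1).2 h.2, h.1⟩⟩
end

section
/- Let P be a normal logic program, X ∈ {E,A}, and χ ∈ {HP,EB,EH}. A Herbrand interpretation M is a stable model of P if and only if there exists a consistent stableˣ expansion T of τ_χ(P) such that M = T_oga. The same holds for τ⁻_HP and stableᴬ expansions. -/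
set_option autoImplicit false

namespace FOAEL

variable {S : Sig}

def depth : Formula S → ℕ
  | .atom _ _ => 0
  | .eq _ _ => 0
  | .not φ => depth φ
  | .and φ ψ => max (depth φ) (depth ψ)
  | .ex _ φ => depth φ
  | .box φ => depth φ + 1

theorem depth_subst (φ : Formula S) : ∀ β, depth (φ.subst β) = depth φ := by
  induction φ with
  | atom p ts => intro β; rfl
  | eq a b => intro β; rfl
  | not φ ih => intro β; simp [Formula.subst, depth, ih]
  | and φ ψ ih1 ih2 => intro β; simp [Formula.subst, depth, ih1, ih2]
  | ex x φ ih => intro β; simp [Formula.subst, depth, ih]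
  | box φ ih => intro β; simp [Formula.subst, depth, ih]

theorem sat_box_any (w : Interp S) (Γ : Set (Formula S)) (φ : Formula S) (B : ℕ → w.U) :
    Sat Sem.any w Γ (.box φ) B ↔ ∃ β, Assoc w B β ∧ (φ.subst β).closed ∧ φ.subst β ∈ Γ := Iff.rfl

theorem sat_box_all (w : Interp S) (Γ : Set (Formula S)) (φ : Formula S) (B : ℕ → w.U) :
    Sat Sem.all w Γ (.box φ) B ↔ ∀ β, Assoc w B β → (φ.subst β).closed ∧ φ.subst β ∈ Γ := Iff.rfl

theorem sat_box_congr (X : Sem) (w : Interp S) (Γ Γ' : Set (Formula S)) (φ : Formula S)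
    (B : ℕ → w.U)
    (h : ∀ β, (φ.subst β).closed → (φ.subst β ∈ Γ ↔ φ.subst β ∈ Γ')) :
    Sat X w Γ (.box φ) B ↔ Sat X w Γ' (.box φ) B := by
  cases X
  · rw [sat_box_any, sat_box_any]
    exact exists_congr fun β => and_congr_right fun _ => and_congr_right fun hc => h β hc
  · rw [sat_box_all, sat_box_all]
    exact forall_congr' fun β => imp_congr_right fun _ => and_congr_right fun hc => h β hc

theorem sat_congr_depth (X : Sem) (w : Interp S) (Γ Γ' : Set (Formula S)) (n : ℕ)
    (h : ∀ ψ, depth ψ < n → (ψ ∈ Γ ↔ ψ ∈ Γ')) (φ : Formula S) :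
    depth φ ≤ n → ∀ B : ℕ → w.U, (Sat X w Γ φ B ↔ Sat X w Γ' φ B) := by
  induction φ with
  | atom p ts => intro _ B; rfl
  | eq a b => intro _ B; rfl
  | not φ ih => intro hd B; exact not_congr (ih hd B)
  | and φ ψ ih1 ih2 =>
    intro hd B
    simp only [depth] at hd
    exact and_congr (ih1 (by omega) B) (ih2 (by omega) B)
  | ex x φ ih => intro hd B; exact exists_congr fun u => ih hd _
  | box φ ih =>
    intro hd B
    simp only [depth] at hd
    exact sat_box_congr X w Γ Γ' φ B fun β _ => h _ (by rw [depth_subst]; omega)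

def Tn (X : Sem) (W : Interp S → Prop) : ℕ → Set (Formula S)
  | 0 => ∅
  | n + 1 => {φ | ∀ w, W w → ModelsF X w (Tn X W n) φ}

theorem Tn_agree (X : Sem) (W : Interp S → Prop) (n : ℕ) :
    ∀ m, n ≤ m → ∀ φ, depth φ < n → (φ ∈ Tn X W n ↔ φ ∈ Tn X W m) := by
  induction n with
  | zero => intro m _ φ h; omega
  | succ n ih =>
    intro m hm φ hd
    obtain ⟨m, rfl⟩ : ∃ k, m = k + 1 := ⟨m - 1, by omega⟩
    refine forall_congr' fun w => imp_congr_right fun _ => forall_congr' fun B => ?_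
    exact sat_congr_depth X w _ _ n (ih m (by omega)) φ (by omega) B

theorem exists_T (X : Sem) (W : Interp S → Prop) :
    ∃ T : Set (Formula S), ∀ φ, φ ∈ T ↔ ∀ w, W w → ModelsF X w T φ := by
  refine ⟨{φ | φ ∈ Tn X W (depth φ + 1)}, fun φ => ?_⟩
  refine forall_congr' fun w => imp_congr_right fun _ => forall_congr' fun B => ?_
  refine sat_congr_depth X w _ _ (depth φ) (fun ψ hψ => ?_) φ le_rfl B
  exact (Tn_agree X W (depth ψ + 1) (depth φ) (by omega) ψ (by omega)).symm

theorem term_ground_of_novar (t : Term S) : (∀ x, ¬ t.hasVar x) → t.isGround := by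
  induction t with
  | var y => intro h; exact (h y rfl).elim
  | func f ts ih => intro h i; exact ih i fun x hx => h x ⟨i, hx⟩

theorem term_novar_of_ground (t : Term S) : t.isGround → (∀ x, ¬ t.hasVar x) := by
  induction t with
  | var y => intro h; exact h.elim
  | func f ts ih => rintro h x ⟨i, hi⟩; exact ih i (h i) x hi

theorem ground_of_closed {φ : Formula S} (ha : φ.isAtomic) (hc : φ.closed) : φ.isGround := by
  cases φ with
  | atom p ts => exact fun i => term_ground_of_novar _ fun x hx => hc x ⟨i, hx⟩
  | eq a b => exact ⟨term_ground_of_novar _ fun x hx => hc x (Or.inl hx),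
      term_ground_of_novar _ fun x hx => hc x (Or.inr hx)⟩
  | _ => exact ha.elim

theorem atomic_subst {φ : Formula S} (ha : φ.isAtomic) (β) : (φ.subst β).isAtomic := by
  cases φ <;> first | trivial | exact ha.elim

theorem obj_of_atomic {φ : Formula S} (ha : φ.isAtomic) : φ.isObjective := by
  cases φ <;> first | trivial | exact ha.elim

theorem sat_congr_atomic (X : Sem) (w : Interp S) (Γ Γ' : Set (Formula S))
    (h : ∀ ψ : Formula S, ψ.isAtomic → ψ.isGround → (ψ ∈ Γ ↔ ψ ∈ Γ')) (φ : Formula S) :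
    φ.boxAtomic → ∀ B : ℕ → w.U, (Sat X w Γ φ B ↔ Sat X w Γ' φ B) := by
  induction φ with
  | atom p ts => intro _ B; rfl
  | eq a b => intro _ B; rfl
  | not φ ih => intro hd B; exact not_congr (ih hd B)
  | and φ ψ ih1 ih2 => intro hd B; exact and_congr (ih1 hd.1 B) (ih2 hd.2 B)
  | ex x φ ih => intro hd B; exact exists_congr fun u => ih hd _
  | box φ ih =>
    intro hd B
    exact sat_box_congr X w Γ Γ' φ B fun β hc =>
      h _ (atomic_subst hd β) (ground_of_closed (atomic_subst hd β) hc)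

theorem boxAtomic_of_atomic {φ : Formula S} (ha : φ.isAtomic) : φ.boxAtomic := by
  cases φ <;> first | trivial | exact ha.elim

theorem modelsT_congr (X : Sem) (w : Interp S) (Γ Γ' Φ : Set (Formula S))
    (h : ∀ ψ : Formula S, ψ.isAtomic → ψ.isGround → (ψ ∈ Γ ↔ ψ ∈ Γ'))
    (hΦ : ∀ φ ∈ Φ, φ.boxAtomic) : ModelsT X w Γ Φ ↔ ModelsT X w Γ' Φ :=
  forall_congr' fun φ => forall_congr' fun hφ => forall_congr' fun B =>
    sat_congr_atomic X w Γ Γ' h φ (hΦ φ hφ) B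

theorem red (X : Sem) (Φ M : Set (Formula S)) (hΦ : ∀ φ ∈ Φ, φ.boxAtomic) (hM : HerbrandI M) :
    (∃ T, StableExp X Φ T ∧ Consistent T ∧ M = ogaOf T) ↔
    (∃ w, ModelsT X w M Φ) ∧ ∀ φ : Formula S, φ.isAtomic → φ.isGround →
      (φ ∈ M ↔ ∀ w, ModelsT X w M Φ → ModelsF X w M φ) := by
  constructor
  · rintro ⟨T, hT, hc, hMT⟩
    have hag : ∀ ψ : Formula S, ψ.isAtomic → ψ.isGround → (ψ ∈ T ↔ ψ ∈ M) := by
      intro ψ ha hg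
      rw [hMT]
      exact ⟨fun h => ⟨h, obj_of_atomic ha, hg, ha⟩, fun h => h.1⟩
    have hmem : ∀ φ, φ ∈ T ↔ Entails X Φ T φ := fun φ => by
      conv_lhs => rw [hT]
      rfl
    constructor
    · by_contra hno
      apply hc
      ext φ
      simp only [Set.mem_univ, iff_true]
      rw [hmem]
      intro w hw
      exact (hno ⟨w, (modelsT_congr X w T M Φ hag hΦ).1 hw⟩).elim
    · intro φ ha hg
      rw [← hag φ ha hg, hmem]
      refine forall_congr' fun w => imp_congr (modelsT_congr X w T M Φ hag hΦ) ?_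
      exact forall_congr' fun B => sat_congr_atomic X w T M hag φ (boxAtomic_of_atomic ha) B
  · rintro ⟨⟨w0, hw0⟩, h⟩
    obtain ⟨T, hT⟩ := exists_T X (fun w => ModelsT X w M Φ)
    have hag : ∀ ψ : Formula S, ψ.isAtomic → ψ.isGround → (ψ ∈ T ↔ ψ ∈ M) := by
      intro ψ ha hg
      rw [hT, h ψ ha hg]
      refine forall_congr' fun w => imp_congr_right fun _ => forall_congr' fun B => ?_
      cases ψ <;> first | exact Iff.rfl | exact ha.elim
    refine ⟨T, ?_, ?_, ?_⟩
    · ext φ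
      rw [hT]
      exact forall_congr' fun w => imp_congr_left (modelsT_congr X w T M Φ hag hΦ).symm
    · intro hu
      have : Formula.not (Formula.eq (Term.var 0) (Term.var 0)) ∈ T := hu ▸ Set.mem_univ _
      exact (hT _).1 this w0 hw0 (fun _ => w0.dflt) rfl
    · ext φ
      constructor
      · intro hφ
        obtain ⟨ha, hg⟩ := hM φ hφ
        exact ⟨(hag φ ha hg).2 hφ, obj_of_atomic ha, hg, ha⟩
      · rintro ⟨h1, _, hg, ha⟩
        exact (hag φ ha hg).1 h1

/-! Herbrand interpretations -/

def InjN (w : Interp S) : Prop :=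
  ∀ t₁ t₂ : Term S, t₁.isGround → t₂.isGround → Term.evalG w t₁ = Term.evalG w t₂ → t₁ = t₂

def HoldsA (w : Interp S) (a : PAtom S) : Prop :=
  w.interpP a.p (fun i => (a.args i).evalG w)

theorem exists_herb (hs : (∃ f : S.Func, S.arF f = 0) ∨ ∀ p : S.Pred, S.arP p = 0)
    (V : Set (Formula S)) :
    ∃ w : Interp S, InjN w ∧ (∀ p : S.Pred, 0 < S.arP p → ∀ u, IsNamed w u) ∧
      ∀ a : PAtom S, a.isGround → (HoldsA w a ↔ a.toFormula ∈ V) := by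
  by_cases hc : ∃ f : S.Func, S.arF f = 0
  · obtain ⟨f, hf⟩ := hc
    let w : Interp S :=
      { U := {t : Term S // t.isGround}
        nonempty := ⟨⟨Term.func f (fun _ => Term.var 0), fun i => by
          exact absurd i.2 (by omega)⟩⟩
        interpF := fun g ts => ⟨Term.func g (fun i => (ts i).1), fun i => (ts i).2⟩
        interpP := fun p ts => Formula.atom p (fun i => (ts i).1) ∈ V }
    have hev : ∀ t : Term S, t.isGround → ∀ B, (Term.eval w B t).1 = t := by
      intro t
      induction t with
      | var x => intro h; exact h.elim
      | func g ts ih =>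
        intro h B
        show Term.func g (fun i => (Term.eval w B (ts i)).1) = _
        congr 1
        funext i
        exact ih i (h i) B
    refine ⟨w, ?_, ?_, ?_⟩
    · intro t₁ t₂ h1 h2 he
      have := congrArg Subtype.val he
      rwa [Term.evalG, Term.evalG, hev _ h1, hev _ h2] at this
    · intro p _ u
      exact ⟨u.1, u.2, Subtype.ext (hev _ u.2 _)⟩
    · intro a ha
      show Formula.atom a.p (fun i => (Term.eval w _ (a.args i)).1) ∈ V ↔ Formula.atom a.p a.args ∈ V
      have : (fun i => (Term.eval w (fun _ => w.dflt) (a.args i)).1) = a.args :=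
        funext fun i => hev _ (ha i) _
      rw [this]
  · have hp := hs.resolve_left hc
    have hng : ∀ t : Term S, ¬ t.isGround := by
      intro t
      induction t with
      | var x => exact id
      | func g ts ih =>
        intro h
        have : 0 < S.arF g := Nat.pos_of_ne_zero fun h0 => hc ⟨g, h0⟩
        exact ih ⟨0, this⟩ (h _)
    refine ⟨{ U := Unit, nonempty := ⟨()⟩, interpF := fun _ _ => (),
              interpP := fun p _ => Formula.atom p (fun _ => Term.var 0) ∈ V }, ?_, ?_, ?_⟩
    · intro t _ h; exact (hng t h).elim
    · intro p h; rw [hp p] at h; omega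
    · intro a ha
      show Formula.atom a.p _ ∈ V ↔ Formula.atom a.p a.args ∈ V
      have : (fun _ => Term.var 0) = a.args :=
        funext fun i => absurd i.pos (by have := hp a.p; omega)
      rw [this]

/-! Ground instances -/

theorem eval_subst (w : Interp S) (B B' : ℕ → w.U) (β : ℕ → Option (Term S)) (t : Term S) :
    (∀ x, t.hasVar x → Term.eval w B' ((β x).getD (Term.var x)) = B x) →
    Term.eval w B' (t.subst β) = Term.eval w B t := by
  induction t with
  | var x => intro h; exact h x rfl
  | func f ts ih =>
    intro h
    show w.interpF f _ = w.interpF f _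
    congr 1
    funext i
    exact ih i fun x hx => h x ⟨i, hx⟩

theorem ground_subst (β : ℕ → Option (Term S)) (t : Term S) :
    (∀ x, t.hasVar x → ((β x).getD (Term.var x)).isGround) → (t.subst β).isGround := by
  induction t with
  | var x => intro h; exact h x rfl
  | func f ts ih => intro h i; exact ih i fun x hx => h x ⟨i, hx⟩

theorem subst_congr (β β' : ℕ → Option (Term S)) (t : Term S) :
    (∀ x, t.hasVar x → β x = β' x) → t.subst β = t.subst β' := by
  induction t with
  | var x => intro h; simp [Term.subst, h x rfl]
  | func f ts ih =>
    intro h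
    simp only [Term.subst]
    congr 1
    funext i
    exact ih i fun x hx => h x ⟨i, hx⟩

/-- `σ` names the values of the variables of `a` under `B`. -/
def NamesA (w : Interp S) (B : ℕ → w.U) (σ : ℕ → Term S) (a : PAtom S) : Prop :=
  ∀ x, a.hasVar x → (σ x).isGround ∧ (σ x).evalG w = B x

theorem ground_substA {σ : ℕ → Term S} {a : PAtom S}
    (h : ∀ x, a.hasVar x → (σ x).isGround) : (a.substA σ).isGround :=
  fun i => ground_subst _ _ fun x hx => h x ⟨i, hx⟩

theorem NamesA.ground {w : Interp S} {B : ℕ → w.U} {σ : ℕ → Term S} {a : PAtom S}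
    (h : NamesA w B σ a) : (a.substA σ).isGround := ground_substA fun x hx => (h x hx).1

theorem sat_atom (X : Sem) (Γ : Set (Formula S)) {w : Interp S} {B : ℕ → w.U}
    {σ : ℕ → Term S} {a : PAtom S} (h : NamesA w B σ a) :
    Sat X w Γ a.toFormula B ↔ HoldsA w (a.substA σ) := by
  show w.interpP a.p (fun i => (a.args i).eval w B) ↔
    w.interpP a.p (fun i => ((a.args i).subst (fun x => some (σ x))).evalG w)
  have : (fun i => ((a.args i).subst (fun x => some (σ x))).evalG w) =
      (fun i => (a.args i).eval w B) := funext fun i =>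
    eval_subst w B _ _ _ fun x hx => (h x ⟨i, hx⟩).2
  rw [this]

def CongW (w : Interp S) (M : Set (Formula S)) : Prop :=
  ∀ (p : S.Pred) (ts ts' : Fin (S.arP p) → Term S), (∀ i, (ts i).isGround) →
    (∀ i, (ts' i).isGround) → (∀ i, (ts i).evalG w = (ts' i).evalG w) →
    Formula.atom p ts ∈ M → Formula.atom p ts' ∈ M

theorem exists_assoc {w : Interp S} {B : ℕ → w.U} {σ : ℕ → Term S} {a : PAtom S}
    (h : NamesA w B σ a) :
    ∃ β, Assoc w B β ∧ a.toFormula.subst β = (a.substA σ).toFormula := by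
  classical
  refine ⟨fun x => if a.hasVar x then some (σ x) else
    if hn : IsNamed w (B x) then some hn.choose else none, ?_, ?_⟩
  · intro x
    by_cases hx : a.hasVar x
    · simp only [hx, if_true]
      refine ⟨fun _ => rfl, fun t ht => ?_⟩
      cases ht
      exact h x hx
    · by_cases hn : IsNamed w (B x)
      · simp only [hx, hn, if_false, dif_pos]
        refine ⟨fun _ => rfl, fun t ht => ?_⟩
        cases ht
        exact hn.choose_spec
      · simp only [hx, hn, if_false]
        refine ⟨fun h => h.elim, fun t ht => by simp at ht⟩
  · show Formula.atom a.p _ = Formula.atom a.p _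
    congr 1
    funext i
    refine subst_congr _ _ _ fun x hx => ?_
    have : a.hasVar x := ⟨i, hx⟩
    simp [this]

theorem closed_atom {p : S.Pred} {ts : Fin (S.arP p) → Term S} (h : ∀ i, (ts i).isGround) :
    (Formula.atom p ts).closed := by
  rintro x ⟨i, hi⟩
  exact term_novar_of_ground _ (h i) x hi

theorem assoc_inst {w : Interp S} {B : ℕ → w.U} {σ : ℕ → Term S} {a : PAtom S}
    (h : NamesA w B σ a) {β} (hβ : Assoc w B β) (i : Fin (S.arP a.p)) :
    ((a.args i).subst β).isGround ∧
      ((a.args i).subst β).evalG w = ((a.substA σ).args i).evalG w := by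
  have key : ∀ x, (a.args i).hasVar x → ∃ t, β x = some t ∧ t.isGround ∧ t.evalG w = B x := by
    intro x hx
    have hn : IsNamed w (B x) := ⟨σ x, h x ⟨i, hx⟩⟩
    obtain ⟨t, ht⟩ := Option.isSome_iff_exists.1 ((hβ x).1 hn)
    exact ⟨t, ht, (hβ x).2 t ht⟩
  constructor
  · refine ground_subst _ _ fun x hx => ?_
    obtain ⟨t, ht, hg, _⟩ := key x hx
    rw [ht]; exact hg
  · have h1 : ((a.args i).subst β).evalG w = (a.args i).eval w B := by
      refine eval_subst w B _ _ _ fun x hx => ?_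
      obtain ⟨t, ht, _, he⟩ := key x hx
      rw [ht]; exact he
    have h2 : ((a.substA σ).args i).evalG w = (a.args i).eval w B :=
      eval_subst w B _ _ _ fun x hx => (h x ⟨i, hx⟩).2
    rw [h1, h2]

theorem sat_box_all_mp {M : Set (Formula S)} {w : Interp S} {B : ℕ → w.U}
    {σ : ℕ → Term S} {a : PAtom S} (h : NamesA w B σ a)
    (hb : Sat Sem.all w M (.box a.toFormula) B) : (a.substA σ).toFormula ∈ M := by
  obtain ⟨β, hβ, he⟩ := exists_assoc h
  rw [← he]
  exact (((sat_box_all _ _ _ _).1 hb) β hβ).2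

theorem sat_box (X : Sem) {M : Set (Formula S)} {w : Interp S} (hc : CongW w M) {B : ℕ → w.U}
    {σ : ℕ → Term S} {a : PAtom S} (h : NamesA w B σ a) :
    Sat X w M (.box a.toFormula) B ↔ (a.substA σ).toFormula ∈ M := by
  cases X
  · rw [sat_box_any]
    constructor
    · rintro ⟨β, hβ, _, hm⟩
      exact hc a.p _ _ (fun i => (assoc_inst h hβ i).1) h.ground
        (fun i => (assoc_inst h hβ i).2) hm
    · intro hm
      obtain ⟨β, hβ, he⟩ := exists_assoc h
      refine ⟨β, hβ, ?_, he ▸ hm⟩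
      rw [he]; exact closed_atom h.ground
  · refine ⟨sat_box_all_mp h, fun hm => (sat_box_all _ _ _ _).2 fun β hβ => ⟨?_, ?_⟩⟩
    · exact closed_atom fun i => (assoc_inst h hβ i).1
    · exact hc a.p _ _ h.ground (fun i => (assoc_inst h hβ i).1)
        (fun i => (assoc_inst h hβ i).2.symm) hm

theorem congW_of_inj {w : Interp S} (hw : InjN w) (M : Set (Formula S)) : CongW w M := by
  intro p ts ts' h h' he hm
  have : ts = ts' := funext fun i => hw _ _ (h i) (h' i) (he i)
  rwa [← this]

/-! Unfolding the embeddings -/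

theorem modelsF_uclosure (X : Sem) (w : Interp S) (Γ : Set (Formula S)) (vs : List ℕ)
    (φ : Formula S) : ModelsF X w Γ (uclosure vs φ) ↔ ModelsF X w Γ φ := by
  induction vs with
  | nil => rfl
  | cons x vs ih =>
    rw [← ih]
    show (∀ B, ¬ ∃ u, ¬ Sat X w Γ (uclosure vs φ) (Function.update B x u)) ↔ _
    constructor
    · intro h B
      by_contra hn
      exact h B ⟨B x, by rwa [Function.update_eq_self]⟩
    · rintro h B ⟨u, hu⟩
      exact hu (h _)

theorem sat_andAll (X : Sem) (w : Interp S) (Γ : Set (Formula S)) (B : ℕ → w.U)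
    (l : List (Formula S)) : ∀ φ, Sat X w Γ (andAll φ l) B ↔ ∀ ψ ∈ φ :: l, Sat X w Γ ψ B := by
  induction l with
  | nil => intro φ; simp [andAll]
  | cons a l ih =>
    intro φ
    rw [andAll, ih]
    simp [Sat, and_assoc]

theorem sat_impOf (X : Sem) (w : Interp S) (Γ : Set (Formula S)) (B : ℕ → w.U)
    (l : List (Formula S)) (c : Formula S) :
    Sat X w Γ (impOf l c) B ↔ ((∀ ψ ∈ l, Sat X w Γ ψ B) → Sat X w Γ c B) := by
  cases l with
  | nil => simp [impOf]
  | cons a l =>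
    show ¬ (Sat X w Γ (andAll a l) B ∧ ¬ Sat X w Γ c B) ↔ _
    rw [sat_andAll]
    tauto

theorem bA_uclosure (vs : List ℕ) (φ : Formula S) (h : φ.boxAtomic) :
    (uclosure vs φ).boxAtomic := by
  induction vs with
  | nil => exact h
  | cons x vs ih => exact ih

theorem bA_andAll (l : List (Formula S)) : ∀ φ : Formula S, φ.boxAtomic →
    (∀ ψ ∈ l, ψ.boxAtomic) → (andAll φ l).boxAtomic := by
  induction l with
  | nil => intro φ h _; exact h
  | cons a l ih =>
    intro φ h hl
    exact ih _ ⟨h, hl a (by simp)⟩ fun ψ hψ => hl ψ (by simp [hψ])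

theorem bA_impOf (l : List (Formula S)) (c : Formula S) (hc : c.boxAtomic)
    (hl : ∀ ψ ∈ l, ψ.boxAtomic) : (impOf l c).boxAtomic := by
  cases l with
  | nil => exact hc
  | cons a l => exact ⟨bA_andAll l a (hl a (by simp)) fun ψ hψ => hl ψ (by simp [hψ]), hc⟩

theorem bA_bodyHP (r : Rule S) : ∀ ψ ∈ bodyHP r, ψ.boxAtomic := by
  intro ψ h
  simp only [bodyHP, List.mem_append, List.mem_map] at h
  rcases h with ⟨a, _, rfl⟩ | ⟨a, _, rfl⟩ <;> trivial

theorem bA_bodyE (r : Rule S) : ∀ ψ ∈ bodyE r, ψ.boxAtomic := by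
  intro ψ h
  simp only [bodyE, List.mem_append, List.mem_map] at h
  rcases h with ⟨a, _, rfl⟩ | ⟨a, _, rfl⟩
  · exact ⟨trivial, trivial⟩
  · trivial

theorem models_HP (X : Sem) (w : Interp S) (Γ : Set (Formula S)) (r : Rule S) (h : PAtom S)
    (hr : r.head = [h]) : ModelsF X w Γ (embHP r) ↔ ∀ B,
      (∀ b ∈ r.pos, Sat X w Γ b.toFormula B) →
      (∀ c ∈ r.neg, ¬ Sat X w Γ (.box c.toFormula) B) → Sat X w Γ h.toFormula B := by
  rw [embHP, modelsF_uclosure]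
  refine forall_congr' fun B => ?_
  rw [sat_impOf, hr]
  simp only [bodyHP, List.mem_append, List.mem_map]
  constructor
  · intro H hp hn
    apply H
    rintro ψ (⟨a, ha, rfl⟩ | ⟨a, ha, rfl⟩)
    · exact hp a ha
    · exact hn a ha
  · intro H hb
    exact H (fun b hb' => hb _ (Or.inl ⟨b, hb', rfl⟩)) (fun c hc => hb _ (Or.inr ⟨c, hc, rfl⟩))

theorem sat_bodyE (X : Sem) (w : Interp S) (Γ : Set (Formula S)) (r : Rule S) (B : ℕ → w.U) :
    (∀ ψ ∈ bodyE r, Sat X w Γ ψ B) ↔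
      (∀ b ∈ r.pos, Sat X w Γ b.toFormula B ∧ Sat X w Γ (.box b.toFormula) B) ∧
      (∀ c ∈ r.neg, ¬ Sat X w Γ (.box c.toFormula) B) := by
  simp only [bodyE, List.mem_append, List.mem_map]
  constructor
  · intro H
    exact ⟨fun b hb' => H _ (Or.inl ⟨b, hb', rfl⟩), fun c hc => H _ (Or.inr ⟨c, hc, rfl⟩)⟩
  · rintro ⟨hp, hn⟩ ψ (⟨a, ha, rfl⟩ | ⟨a, ha, rfl⟩)
    · exact hp a ha
    · exact hn a ha

theorem models_EB (X : Sem) (w : Interp S) (Γ : Set (Formula S)) (r : Rule S) (h : PAtom S)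
    (hr : r.head = [h]) : ModelsF X w Γ (embEB r) ↔ ∀ B,
      (∀ b ∈ r.pos, Sat X w Γ b.toFormula B ∧ Sat X w Γ (.box b.toFormula) B) ∧
      (∀ c ∈ r.neg, ¬ Sat X w Γ (.box c.toFormula) B) → Sat X w Γ h.toFormula B := by
  rw [embEB, modelsF_uclosure]
  refine forall_congr' fun B => ?_
  rw [sat_impOf, hr, sat_bodyE]
  rfl

theorem models_EH (X : Sem) (w : Interp S) (Γ : Set (Formula S)) (r : Rule S) (h : PAtom S)
    (hr : r.head = [h]) : ModelsF X w Γ (embEH r) ↔ ∀ B,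
      (∀ b ∈ r.pos, Sat X w Γ b.toFormula B ∧ Sat X w Γ (.box b.toFormula) B) ∧
      (∀ c ∈ r.neg, ¬ Sat X w Γ (.box c.toFormula) B) →
      Sat X w Γ h.toFormula B ∧ Sat X w Γ (.box h.toFormula) B := by
  rw [embEH, modelsF_uclosure]
  refine forall_congr' fun B => ?_
  rw [sat_impOf, hr, sat_bodyE]
  rfl

/-! Abstract facts about the embedding -/

def QM (M : Set (Formula S)) : Prop :=
  (∀ t : Term S, t.isGround → Formula.eq t t ∈ M) ∧
  ∀ (p : S.Pred) (ts ts' : Fin (S.arP p) → Term S), (∀ i, (ts i).isGround) →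
    (∀ i, (ts' i).isGround) → (∀ i, Formula.eq (ts i) (ts' i) ∈ M) →
    Formula.atom p ts ∈ M → Formula.atom p ts' ∈ M

def FA (X : Sem) (P : Program S) (Φ : Set (Formula S)) : Prop :=
  ∀ M, QM M → ∀ w, ModelsT X w M Φ → ∀ r ∈ P, ∀ h, r.head = [h] → ∀ σ : ℕ → Term S,
    (∀ x, r.hasVar x → (σ x).isGround) →
    (∀ b ∈ r.pos, (b.substA σ).toFormula ∈ M ∧ HoldsA w (b.substA σ)) →
    (∀ c ∈ r.neg, (c.substA σ).toFormula ∉ M) → HoldsA w (h.substA σ)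

def FB (X : Sem) (P : Program S) (Φ : Set (Formula S)) : Prop :=
  ∀ M w, InjN w → (∀ p : S.Pred, 0 < S.arP p → ∀ u, IsNamed w u) →
    (∀ a : PAtom S, a.isGround → HoldsA w a → a.toFormula ∈ M) →
    (∀ r ∈ P, ∀ h, r.head = [h] → ∀ σ : ℕ → Term S, (∀ x, r.hasVar x → (σ x).isGround) →
      (∀ b ∈ r.pos, HoldsA w (b.substA σ)) →
      (∀ c ∈ r.neg, (c.substA σ).toFormula ∉ M) → HoldsA w (h.substA σ)) →
    ModelsT X w M Φ

theorem isNameOf_iff {P : Program S} (hfull : fullSig P) (t : Term S) :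
    t.isNameOf (progFuncs P) ↔ t.isGround := by
  induction t with
  | var x => rfl
  | func f ts ih =>
    show (f ∈ progFuncs P ∧ ∀ i, (ts i).isNameOf (progFuncs P)) ↔ ∀ i, (ts i).isGround
    simp only [ih, hfull.1 f, true_and]

theorem subst_ground_term (β : ℕ → Option (Term S)) (t : Term S) (h : t.isGround) :
    t.subst β = t := by
  induction t with
  | var x => exact h.elim
  | func f ts ih =>
    simp only [Term.subst]
    congr 1
    funext i
    exact ih i (h i)

theorem eval_ground (w : Interp S) (B B' : ℕ → w.U) (t : Term S) (h : t.isGround) :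
    t.eval w B = t.eval w B' := by
  induction t with
  | var x => exact h.elim
  | func f ts ih =>
    show w.interpF f _ = w.interpF f _
    congr 1
    funext i
    exact ih i (h i)

theorem exists_assoc0 (w : Interp S) (B : ℕ → w.U) : ∃ β, Assoc w B β := by
  classical
  refine ⟨fun x => if hn : IsNamed w (B x) then some hn.choose else none, fun x => ?_⟩
  by_cases hn : IsNamed w (B x)
  · simp only [hn, dif_pos]
    refine ⟨fun _ => rfl, fun t ht => ?_⟩
    cases ht
    exact hn.choose_spec
  · simp only [hn]
    refine ⟨fun h => h.elim, fun t ht => by simp at ht⟩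

theorem una_mem {X : Sem} {P : Program S} (hfull : fullSig P) {M : Set (Formula S)} {w : Interp S}
    (hw : ModelsT X w M (UNAax P)) (hr : ∀ t : Term S, t.isGround → Formula.eq t t ∈ M)
    (t₁ t₂ : Term S) (h1 : t₁.isGround) (h2 : t₂.isGround) (he : t₁.evalG w = t₂.evalG w) :
    Formula.eq t₁ t₂ ∈ M := by
  by_cases hne : t₁ = t₂
  · subst hne; exact hr _ h1
  · have := hw _ ⟨t₁, t₂, (isNameOf_iff hfull _).2 h1, (isNameOf_iff hfull _).2 h2, hne, rfl⟩
      (fun _ => w.dflt)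
    have hb : Sat X w M (.box (.eq t₁ t₂)) (fun _ => w.dflt) := by
      by_contra hb
      exact this ⟨hb, fun hn => hn he⟩
    obtain ⟨β0, hβ0⟩ := exists_assoc0 w (fun _ => w.dflt)
    have hs : ∀ β, (Formula.eq t₁ t₂).subst β = Formula.eq t₁ t₂ := fun β => by
      simp only [Formula.subst, subst_ground_term _ _ h1, subst_ground_term _ _ h2]
    cases X
    · obtain ⟨β, _, _, hm⟩ := (sat_box_any _ _ _ _).1 hb
      rwa [hs] at hm
    · have := ((sat_box_all _ _ _ _).1 hb β0 hβ0).2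
      rwa [hs] at this

theorem congW_una {X : Sem} {P : Program S} (hfull : fullSig P) {M : Set (Formula S)}
    {w : Interp S} (hw : ModelsT X w M (UNAax P)) (hQ : QM M) : CongW w M :=
  fun p ts ts' h h' he hm =>
    hQ.2 p ts ts' h h' (fun i => una_mem hfull hw hQ.1 _ _ (h i) (h' i) (he i)) hm

theorem una_inj {X : Sem} {P : Program S} (hfull : fullSig P) {M : Set (Formula S)}
    {w : Interp S} (hw : InjN w) : ModelsT X w M (UNAax P) := by
  rintro φ ⟨t₁, t₂, h1, h2, hne, rfl⟩ B
  rw [isNameOf_iff hfull] at h1 h2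
  rintro ⟨_, h⟩
  refine h fun he => hne (hw _ _ h1 h2 ?_)
  change t₁.eval w B = t₂.eval w B at he
  rw [Term.evalG, Term.evalG, eval_ground w _ B t₁ h1, eval_ground w _ B t₂ h2, he]

theorem namesA_of (w : Interp S) {r : Rule S} {σ : ℕ → Term S}
    (hσ : ∀ x, r.hasVar x → (σ x).isGround) {a : PAtom S} (ha : a ∈ r.atoms) :
    NamesA w (fun x => (σ x).evalG w) σ a :=
  fun x hx => ⟨hσ x ⟨a, ha, hx⟩, rfl⟩

theorem mem_pos {r : Rule S} {a : PAtom S} (h : a ∈ r.pos) : a ∈ r.atoms := by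
  simp [Rule.atoms, h]
theorem mem_neg {r : Rule S} {a : PAtom S} (h : a ∈ r.neg) : a ∈ r.atoms := by
  simp [Rule.atoms, h]
theorem mem_head {r : Rule S} {h : PAtom S} (hr : r.head = [h]) : h ∈ r.atoms := by
  simp [Rule.atoms, hr]

theorem exists_sigma (w : Interp S) (hw : ∀ p : S.Pred, 0 < S.arP p → ∀ u, IsNamed w u)
    (B : ℕ → w.U) : ∃ σ : ℕ → Term S, ∀ a : PAtom S, NamesA w B σ a := by
  by_cases h : ∃ p : S.Pred, 0 < S.arP p
  · obtain ⟨p, hp⟩ := h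
    choose f hf using hw p hp
    exact ⟨fun x => f (B x), fun a x _ => hf (B x)⟩
  · refine ⟨fun _ => Term.var 0, fun a x hx => ?_⟩
    obtain ⟨i, _⟩ := hx
    exact (h ⟨a.p, i.pos⟩).elim

theorem FA_HPminus (P : Program S) : FA Sem.all P (tauHPminus P) := by
  intro M _ w hw r hr h hh σ hσ hp hn
  have := (models_HP Sem.all w M r h hh).1 (hw _ ⟨r, hr, rfl⟩) (fun x => (σ x).evalG w)
  rw [← sat_atom Sem.all M (namesA_of w hσ (mem_head hh))]
  refine this (fun b hb => ?_) (fun c hc hs => ?_)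
  · rw [sat_atom Sem.all M (namesA_of w hσ (mem_pos hb))]; exact (hp b hb).2
  · exact hn c hc (sat_box_all_mp (namesA_of w hσ (mem_neg hc)) hs)

theorem FA_HP (X : Sem) (P : Program S) (hfull : fullSig P) : FA X P (tauHP P) := by
  intro M hQ w hw r hr h hh σ hσ hp hn
  have hc := congW_una hfull (fun φ hφ => hw φ (Or.inr hφ) : ModelsT X w M (UNAax P)) hQ
  have := (models_HP X w M r h hh).1 (hw _ (Or.inl ⟨r, hr, rfl⟩)) (fun x => (σ x).evalG w)
  rw [← sat_atom X M (namesA_of w hσ (mem_head hh))]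
  refine this (fun b hb => ?_) (fun c hc' hs => ?_)
  · rw [sat_atom X M (namesA_of w hσ (mem_pos hb))]; exact (hp b hb).2
  · exact hn c hc' ((sat_box X hc (namesA_of w hσ (mem_neg hc'))).1 hs)

theorem body_E_aux (X : Sem) {M : Set (Formula S)} {w : Interp S} (hc : CongW w M) {r : Rule S}
    {σ : ℕ → Term S} (hσ : ∀ x, r.hasVar x → (σ x).isGround)
    (hp : ∀ b ∈ r.pos, (b.substA σ).toFormula ∈ M ∧ HoldsA w (b.substA σ))
    (hn : ∀ c ∈ r.neg, (c.substA σ).toFormula ∉ M) :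
    (∀ b ∈ r.pos, Sat X w M b.toFormula (fun x => (σ x).evalG w) ∧
      Sat X w M (.box b.toFormula) (fun x => (σ x).evalG w)) ∧
      (∀ c ∈ r.neg, ¬ Sat X w M (.box c.toFormula) (fun x => (σ x).evalG w)) := by
  refine ⟨fun b hb => ⟨?_, ?_⟩, fun c hc' hs => ?_⟩
  · rw [sat_atom X M (namesA_of w hσ (mem_pos hb))]; exact (hp b hb).2
  · rw [sat_box X hc (namesA_of w hσ (mem_pos hb))]; exact (hp b hb).1
  · exact hn c hc' ((sat_box X hc (namesA_of w hσ (mem_neg hc'))).1 hs)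

theorem FA_EB (X : Sem) (P : Program S) (hfull : fullSig P) : FA X P (tauEB P) := by
  intro M hQ w hw r hr h hh σ hσ hp hn
  have hc := congW_una hfull (fun φ hφ => hw φ (Or.inr hφ) : ModelsT X w M (UNAax P)) hQ
  have := (models_EB X w M r h hh).1 (hw _ (Or.inl ⟨r, hr, rfl⟩)) (fun x => (σ x).evalG w)
  rw [← sat_atom X M (namesA_of w hσ (mem_head hh))]
  exact this (body_E_aux X hc hσ hp hn)

theorem FA_EH (X : Sem) (P : Program S) (hfull : fullSig P) : FA X P (tauEH P) := by
  intro M hQ w hw r hr h hh σ hσ hp hn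
  have hc := congW_una hfull (fun φ hφ => hw φ (Or.inr hφ) : ModelsT X w M (UNAax P)) hQ
  have := (models_EH X w M r h hh).1 (hw _ (Or.inl ⟨r, hr, rfl⟩)) (fun x => (σ x).evalG w)
  rw [← sat_atom X M (namesA_of w hσ (mem_head hh))]
  exact (this (body_E_aux X hc hσ hp hn)).1

theorem normal_head {P : Program S} (hnormal : progNormal P) {r : Rule S} (hr : r ∈ P) :
    ∃ h, r.head = [h] := List.length_eq_one_iff.1 (hnormal r hr)

theorem FB_HPminus (X : Sem) (P : Program S) (hnormal : progNormal P) :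
    FB X P (tauHPminus P) := by
  intro M w hi hnm _ H
  rintro φ ⟨r, hr, rfl⟩
  obtain ⟨h, hh⟩ := normal_head hnormal hr
  rw [models_HP X w M r h hh]
  intro B hp hn
  obtain ⟨σ, hσ⟩ := exists_sigma w hnm B
  have hc := congW_of_inj hi M
  rw [sat_atom X M (hσ h)]
  refine H r hr h hh σ (fun x ⟨a, _, hx⟩ => (hσ a x hx).1) (fun b hb => ?_) (fun c hc' hs => ?_)
  · rw [← sat_atom X M (hσ b)]; exact hp b hb
  · exact hn c hc' ((sat_box X hc (hσ c)).2 hs)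

theorem FB_HP (X : Sem) (P : Program S) (hfull : fullSig P) (hnormal : progNormal P) :
    FB X P (tauHP P) := by
  rintro M w hi hnm h1 H φ (h | h)
  · exact FB_HPminus X P hnormal M w hi hnm h1 H φ h
  · exact una_inj hfull hi φ h

theorem FB_EH (X : Sem) (P : Program S) (hfull : fullSig P) (hnormal : progNormal P) :
    FB X P (tauEH P) := by
  rintro M w hi hnm h1 H φ (⟨r, hr, rfl⟩ | h)
  · obtain ⟨h, hh⟩ := normal_head hnormal hr
    rw [models_EH X w M r h hh]
    rintro B ⟨hp, hn⟩
    obtain ⟨σ, hσ⟩ := exists_sigma w hnm B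
    have hc := congW_of_inj hi M
    rw [sat_atom X M (hσ h), sat_box X hc (hσ h)]
    have hH : HoldsA w (h.substA σ) := by
      refine H r hr h hh σ (fun x ⟨a, _, hx⟩ => (hσ a x hx).1) (fun b hb => ?_)
        (fun c hc' hs => ?_)
      · rw [← sat_atom X M (hσ b)]; exact (hp b hb).1
      · exact hn c hc' ((sat_box X hc (hσ c)).2 hs)
    exact ⟨hH, h1 _ (hσ h).ground hH⟩
  · exact una_inj hfull hi φ h

theorem FB_EB (X : Sem) (P : Program S) (hfull : fullSig P) (hnormal : progNormal P) :
    FB X P (tauEB P) := by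
  intro M w hi hnm h1 H φ hφ
  have hEH := FB_EH X P hfull hnormal M w hi hnm h1 H
  rcases hφ with ⟨r, hr, rfl⟩ | h
  · obtain ⟨h, hh⟩ := normal_head hnormal hr
    rw [models_EB X w M r h hh]
    intro B hB
    exact ((models_EH X w M r h hh).1 (hEH _ (Or.inl ⟨r, hr, rfl⟩)) B hB).1
  · exact una_inj hfull hi φ h

theorem bA_rules (P : Program S) (hnormal : progNormal P) :
    (∀ φ ∈ ruleEmb embHP P, φ.boxAtomic) ∧ (∀ φ ∈ ruleEmb embEB P, φ.boxAtomic) ∧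
    (∀ φ ∈ ruleEmb embEH P, φ.boxAtomic) := by
  refine ⟨?_, ?_, ?_⟩ <;> rintro φ ⟨r, hr, rfl⟩ <;> obtain ⟨h, hh⟩ := normal_head hnormal hr
  · refine bA_uclosure _ _ (bA_impOf _ _ ?_ (bA_bodyHP r))
    rw [hh]; trivial
  · refine bA_uclosure _ _ (bA_impOf _ _ ?_ (bA_bodyE r))
    rw [hh]; trivial
  · refine bA_uclosure _ _ (bA_impOf _ _ ?_ (bA_bodyE r))
    rw [hh]; exact ⟨trivial, trivial⟩

theorem bA_una (P : Program S) : ∀ φ ∈ UNAax P, φ.boxAtomic := by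
  rintro φ ⟨t₁, t₂, _, _, _, rfl⟩
  exact ⟨trivial, trivial⟩

/-! Main equivalence -/

theorem reduct_iff {P : Program S} (hfull : fullSig P) (hnormal : progNormal P)
    (M M' : Set (Formula S)) :
    HerbrandModelOf P (reduct P M) M' ↔ HerbrandI M' ∧
      (∀ r ∈ P, ∀ h, r.head = [h] → ∀ σ : ℕ → Term S, (∀ x, r.hasVar x → (σ x).isGround) →
        (∀ b ∈ r.pos, (b.substA σ).toFormula ∈ M') →
        (∀ c ∈ r.neg, (c.substA σ).toFormula ∉ M) → (h.substA σ).toFormula ∈ M') ∧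
      (∀ t : Term S, t.isGround → Formula.eq t t ∈ M') := by
  unfold HerbrandModelOf
  simp only [isNameOf_iff hfull]
  refine and_congr_right fun _ => and_congr_left fun _ => ?_
  constructor
  · intro H r hr h hh σ hσ hp hn
    obtain ⟨h', hh', hm⟩ := H ⟨(r.applySubst σ).head, (r.applySubst σ).pos, [], []⟩
      ⟨r.applySubst σ, ⟨r, hr, σ, fun x hx => (isNameOf_iff hfull _).2 (hσ x hx), rfl⟩, by
        intro c hc
        obtain ⟨c', hc', rfl⟩ := List.mem_map.1 hc
        exact hn c' hc', rfl⟩ (by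
        intro b hb
        obtain ⟨b', hb', rfl⟩ := List.mem_map.1 hb
        exact hp b' hb')
    simp only [Rule.applySubst, hh, List.map_cons, List.map_nil, List.mem_singleton] at hh'
    rwa [← hh']
  · rintro H _ ⟨_, ⟨r, hr, σ, hσ, rfl⟩, hn, rfl⟩ hp
    obtain ⟨h, hh⟩ := normal_head hnormal hr
    refine ⟨h.substA σ, ?_, H r hr h hh σ (fun x hx => (isNameOf_iff hfull _).1 (hσ x hx)) ?_ ?_⟩
    · simp [Rule.applySubst, hh]
    · exact fun b hb => hp _ (List.mem_map.2 ⟨b, hb, rfl⟩)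
    · exact fun c hc => hn _ (List.mem_map.2 ⟨c, hc, rfl⟩)

theorem modelsF_atom (X : Sem) (w : Interp S) (M : Set (Formula S)) (a : PAtom S)
    (ha : a.isGround) : ModelsF X w M a.toFormula ↔ HoldsA w a := by
  have : ∀ B : ℕ → w.U, (fun i => (a.args i).eval w B) = fun i => (a.args i).evalG w :=
    fun B => funext fun i => eval_ground w _ _ _ (ha i)
  show (∀ B, w.interpP a.p (fun i => (a.args i).eval w B)) ↔ _
  simp only [this]
  exact ⟨fun h => h fun _ => w.dflt, fun h _ => h⟩

theorem modelsF_eq (X : Sem) (w : Interp S) (M : Set (Formula S)) (t₁ t₂ : Term S)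
    (h1 : t₁.isGround) (h2 : t₂.isGround) :
    ModelsF X w M (.eq t₁ t₂) ↔ t₁.evalG w = t₂.evalG w := by
  constructor
  · intro h; exact h _
  · intro h B
    show t₁.eval w B = t₂.eval w B
    rw [eval_ground w B (fun _ => w.dflt) t₁ h1, eval_ground w B (fun _ => w.dflt) t₂ h2]
    exact h

/-- The Herbrand interpretation of a model of the reduct is a model of the embedding. -/
theorem herb_model {X : Sem} {P : Program S} {Φ : Set (Formula S)}
    (hs : (∃ f : S.Func, S.arF f = 0) ∨ ∀ p : S.Pred, S.arP p = 0)
    (hfull : fullSig P) (hnormal : progNormal P) (hB : FB X P Φ)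
    {M M' : Set (Formula S)} (hsub : M' ⊆ M) (hm : HerbrandModelOf P (reduct P M) M') :
    ∃ w, ModelsT X w M Φ ∧ ∀ φ : Formula S, φ.isAtomic → φ.isGround → ModelsF X w M φ → φ ∈ M' := by
  obtain ⟨hH, hrule, hrefl⟩ := (reduct_iff hfull hnormal M M').1 hm
  obtain ⟨w, hi, hnm, hV⟩ := exists_herb hs M'
  refine ⟨w, hB M w hi hnm (fun a ha h => hsub ((hV a ha).1 h)) ?_, ?_⟩
  · intro r hr h hh σ hσ hp hn
    have hg : ∀ a ∈ r.atoms, (a.substA σ).isGround := fun a ha =>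
      ground_substA fun x hx => hσ x ⟨a, ha, hx⟩
    rw [hV _ (hg h (mem_head hh))]
    exact hrule r hr h hh σ hσ (fun b hb => (hV _ (hg b (mem_pos hb))).1 (hp b hb)) hn
  · intro φ ha hg hφ
    cases φ with
    | atom p ts => exact (hV ⟨p, ts⟩ hg).1 ((modelsF_atom X w M ⟨p, ts⟩ hg).1 hφ)
    | eq a b =>
      have := hi a b hg.1 hg.2 ((modelsF_eq X w M a b hg.1 hg.2).1 hφ)
      rw [← this]
      exact hrefl a hg.1
    | _ => exact ha.elim

theorem main {X : Sem} {P : Program S} {Φ : Set (Formula S)}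
    (hs : (∃ f : S.Func, S.arF f = 0) ∨ ∀ p : S.Pred, S.arP p = 0)
    (hfull : fullSig P) (hnormal : progNormal P) (hA : FA X P Φ) (hB : FB X P Φ)
    (hΦ : ∀ φ ∈ Φ, φ.boxAtomic) (M : Set (Formula S)) (hM : HerbrandI M) :
    isStableModel P M ↔ ∃ T, StableExp X Φ T ∧ Consistent T ∧ M = ogaOf T := by
  rw [red X Φ M hΦ hM]
  constructor
  · rintro ⟨hmod, hmin⟩
    obtain ⟨w0, hw0, hw0'⟩ := herb_model hs hfull hnormal hB subset_rfl hmod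
    refine ⟨⟨w0, hw0⟩, fun φ ha hg => ⟨fun hφ w hw => ?_, fun h => hw0' φ ha hg (h w0 hw0)⟩⟩
    obtain ⟨_, hrule, hrefl⟩ := (reduct_iff hfull hnormal M M).1 hmod
    have hnoeq : ∀ t₁ t₂ : Term S, Formula.eq t₁ t₂ ∈ M → t₁ = t₂ := by
      intro t₁ t₂ hm
      have := hmin {φ ∈ M | ∀ s t, φ = Formula.eq s t → s = t} (fun _ h => h.1) (by
        rw [reduct_iff hfull hnormal]
        refine ⟨fun φ h => hM φ h.1, ?_, ?_⟩
        · intro r hr h hh σ hσ hp hn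
          exact ⟨hrule r hr h hh σ hσ (fun b hb => (hp b hb).1) hn, fun s t he => by cases he⟩
        · exact fun t ht => ⟨hrefl t ht, fun s t he => by cases he; rfl⟩)
      rw [← this] at hm
      exact hm.2 _ _ rfl
    have hQ : QM M := by
      refine ⟨hrefl, fun p ts ts' _ _ he hm => ?_⟩
      have : ts = ts' := funext fun i => hnoeq _ _ (he i)
      rwa [← this]
    have := hmin {φ ∈ M | ModelsF X w M φ} (fun _ h => h.1) (by
      rw [reduct_iff hfull hnormal]
      refine ⟨fun φ h => hM φ h.1, ?_, ?_⟩
      · intro r hr h hh σ hσ hp hn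
        have hg : ∀ a ∈ r.atoms, (a.substA σ).isGround := fun a ha =>
          ground_substA fun x hx => hσ x ⟨a, ha, hx⟩
        refine ⟨hrule r hr h hh σ hσ (fun b hb => (hp b hb).1) hn, ?_⟩
        rw [modelsF_atom X w M _ (hg h (mem_head hh))]
        exact hA M hQ w hw r hr h hh σ hσ (fun b hb => ⟨(hp b hb).1,
          (modelsF_atom X w M _ (hg b (mem_pos hb))).1 (hp b hb).2⟩) hn
      · exact fun t ht => ⟨hrefl t ht, fun B => rfl⟩)
    rw [← this] at hφ
    exact hφ.2
  · rintro ⟨_, h⟩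
    have hrefl : ∀ t : Term S, t.isGround → Formula.eq t t ∈ M := fun t ht =>
      (h (.eq t t) trivial ⟨ht, ht⟩).2 fun w _ B => rfl
    have hQ : QM M := by
      refine ⟨hrefl, fun p ts ts' hg hg' he hm => ?_⟩
      refine (h (.atom p ts') trivial hg').2 fun w hw => ?_
      have h1 := (modelsF_atom X w M ⟨p, ts⟩ hg).1 ((h (.atom p ts) trivial hg).1 hm w hw)
      refine (modelsF_atom X w M ⟨p, ts'⟩ hg').2 ?_
      have : (fun i => (ts i).evalG w) = fun i => (ts' i).evalG w := funext fun i =>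
        (modelsF_eq X w M _ _ (hg i) (hg' i)).1
          ((h (.eq (ts i) (ts' i)) trivial ⟨hg i, hg' i⟩).1 (he i) w hw)
      show w.interpP p (fun i => (ts' i).evalG w)
      rw [← this]
      exact h1
    refine ⟨?_, fun M' hsub hm => ?_⟩
    · rw [reduct_iff hfull hnormal]
      refine ⟨hM, ?_, hrefl⟩
      intro r hr h' hh σ hσ hp hn
      have hg : ∀ a ∈ r.atoms, (a.substA σ).isGround := fun a ha =>
        ground_substA fun x hx => hσ x ⟨a, ha, hx⟩
      refine (h (h'.substA σ).toFormula trivial (hg h' (mem_head hh))).2 fun w hw => ?_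
      rw [modelsF_atom X w M _ (hg h' (mem_head hh))]
      refine hA M hQ w hw r hr h' hh σ hσ (fun b hb => ⟨hp b hb, ?_⟩) hn
      exact (modelsF_atom X w M _ (hg b (mem_pos hb))).1
        ((h (b.substA σ).toFormula trivial (hg b (mem_pos hb))).1 (hp b hb) w hw)
    · obtain ⟨w, hw, hw'⟩ := herb_model hs hfull hnormal hB hsub hm
      refine subset_antisymm hsub fun φ hφ => ?_
      obtain ⟨ha, hg⟩ := hM φ hφ
      exact hw' φ ha hg ((h φ ha hg).1 hφ w hw)

end FOAEL

/-- Faithfulness for normal programs: A Herbrand interpretation `M`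
is a stable model of the normal program `P` iff there is a consistent stableˣ
expansion `T` of `τ_χ(P)` with `M = T_oga`; the same holds for `τ⁻_HP` and
stableᴬ expansions. -/
theorem stmt3 {S : Sig} (X : Sem) (P : Program S)
    (hwf : progWf P) (hnormal : progNormal P) (hfull : fullSig P) (hgood : goodSig P)
    (τ : Program S → Set (Formula S))
    (hτ : τ = tauHP ∨ τ = tauEB ∨ τ = tauEH)
    (M : Set (Formula S)) (hM : HerbrandI M) :
    (isStableModel P M ↔
      ∃ T, StableExp X (τ P) T ∧ Consistent T ∧ M = ogaOf T) ∧
    (isStableModel P M ↔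
      ∃ T, StableExp Sem.all (tauHPminus P) T ∧ Consistent T ∧ M = ogaOf T) := by
  have hs : (∃ f : S.Func, S.arF f = 0) ∨ ∀ p : S.Pred, S.arP p = 0 := by
    by_cases h : ∃ q ∈ progPreds P, 0 < S.arP q
    · obtain ⟨f, _, hf⟩ := hgood h
      exact Or.inl ⟨f, hf⟩
    · refine Or.inr fun p => ?_
      by_contra hp
      exact h ⟨p, hfull.2 p, Nat.pos_of_ne_zero hp⟩
  have hb := FOAEL.bA_rules P hnormal
  have hu := FOAEL.bA_una P
  constructor
  · rcases hτ with rfl | rfl | rfl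
    · exact FOAEL.main hs hfull hnormal (FOAEL.FA_HP X P hfull) (FOAEL.FB_HP X P hfull hnormal)
        (fun φ hφ => hφ.elim (hb.1 φ) (hu φ)) M hM
    · exact FOAEL.main hs hfull hnormal (FOAEL.FA_EB X P hfull) (FOAEL.FB_EB X P hfull hnormal)
        (fun φ hφ => hφ.elim (hb.2.1 φ) (hu φ)) M hM
    · exact FOAEL.main hs hfull hnormal (FOAEL.FA_EH X P hfull) (FOAEL.FB_EH X P hfull hnormal)
        (fun φ hφ => hφ.elim (hb.2.2 φ) (hu φ)) M hM
  · exact FOAEL.main hs hfull hnormal (FOAEL.FA_HPminus P) (FOAEL.FB_HPminus _ P hnormal)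
      hb.1 M hM
end
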